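/- European put price formula under the TCEV model: with constant rate r, the fair put price is p = -S̄_t β(t) χ'²(K̃/Δφ; δ, S̄_t^{2(1-a)}/Δφ) + K (β(t)/β(T))[χ'²(S̄_t^{2(1-a)}/Δφ; δ-2, 0) - χ'²(S̄_t^{2(1-a)}/Δφ; δ-2, K̃/Δφ)]. -/

import Mathlib

open MeasureTheory

/-- Modified Bessel function of the first kind `I_ν(x)` (series definition). -/
noncomputable def besselI (ν x : ℝ) : ℝ :=
  ∑' k : ℕ, (x / 2) ^ (2 * (k : ℝ) + ν) / ((k.factorial : ℝ) * Real.Gamma ((k : ℝ) + ν + 1))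

/-- The squared Bessel transition density of dimension `δ` over time `T`, from `x` to `y`,
with Bessel index `1 - δ/2` for `δ ≤ 2` (absorbing boundary, norm-decreasing part)
and `δ/2 - 1` for `δ > 2`; i.e. index `|δ/2 - 1|`. -/
noncomputable def besqDensity (δ y T x : ℝ) : ℝ :=
  (1 / (2 * T)) * (y / x) ^ ((1 / 2) * (δ / 2 - 1)) * Real.exp (-(x + y) / (2 * T)) *
    besselI |δ / 2 - 1| (Real.sqrt (x * y) / T)

/-- The noncentral chi-squared density with `k` degrees of freedom and
noncentrality parameter `lam`, evaluated at `z` (Poisson mixture of central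
chi-squared densities). -/
noncomputable def ncChiSqPDF (k lam z : ℝ) : ℝ :=
  ∑' j : ℕ, (Real.exp (-lam / 2) * (lam / 2) ^ j / (j.factorial : ℝ)) *
    (z ^ (k / 2 + (j : ℝ) - 1) * Real.exp (-z / 2) /
      (2 ^ (k / 2 + (j : ℝ)) * Real.Gamma (k / 2 + (j : ℝ))))

/-- The noncentral chi-squared CDF `χ'²(z; k, lam)`. -/
noncomputable def ncChiSqCDF (z k lam : ℝ) : ℝ :=
  ∫ y in (0 : ℝ)..z, ncChiSqPDF k lam y

/-!
The payoff splits the price into two integrals of the BESQ transition density over `y ≤ K̃`. That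
density is a rescaled noncentral chi-squared density, so one of them is `χ'²(K̃/Δφ; δ, ·)`. In the
other the weight `(x/y) ^ (δ/2 - 1)` interchanges the two endpoints of the density, so that the
chi-squared density is integrated over its noncentrality `λ`. Schroder's identity
`∂/∂λ χ'²(z; k, λ) = -pdf(z; k + 2, λ)` evaluates this integral. It holds because `χ'²(z; k, λ)`
is a Poisson average of gamma distribution functions: differentiating in the Poisson rate takes
forward differences in the gamma shape, and by partial integration those are gamma densities up to
a factor.
-/

open ProbabilityTheory Real Set

section PoissonAverage

/-- The expectation of `f N` for a Poisson variable `N` of rate `l`, as a series; this makes sense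
for every real `l`, which lets it be differentiated in the rate without restriction. -/
noncomputable def poissonAverage (f : ℕ → ℝ) (l : ℝ) : ℝ :=
  ∑' j : ℕ, exp (-l) * l ^ j / (j.factorial : ℝ) * f j

variable {f : ℕ → ℝ} {C : ℝ}

lemma summable_pow_div_factorial_mul (hf : ∀ j, |f j| ≤ C) (l : ℝ) :
    Summable fun j : ℕ ↦ l ^ j / (j.factorial : ℝ) * f j := by
  refine .of_norm_bounded ((summable_pow_div_factorial |l|).mul_right C) fun j ↦ ?_
  rw [norm_mul, norm_div, norm_pow, norm_natCast]
  exact mul_le_mul_of_nonneg_left (hf j) (by positivity)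

lemma hasDerivAt_pow_succ_div_factorial (j : ℕ) (l : ℝ) :
    HasDerivAt (fun x : ℝ ↦ x ^ (j + 1) / ((j + 1).factorial : ℝ))
      (l ^ j / (j.factorial : ℝ)) l := by
  refine ((hasDerivAt_pow (j + 1) l).div_const _).congr_deriv ?_
  rw [Nat.factorial_succ, Nat.cast_mul, Nat.add_sub_cancel]
  field_simp

lemma hasDerivAt_tsum_pow_div_factorial_mul (hf : ∀ j, |f j| ≤ C) (l : ℝ) :
    HasDerivAt (fun x ↦ ∑' j : ℕ, x ^ j / (j.factorial : ℝ) * f j)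
      (∑' j : ℕ, l ^ j / (j.factorial : ℝ) * f (j + 1)) l := by
  have split_first : (fun x ↦ ∑' j : ℕ, x ^ j / (j.factorial : ℝ) * f j) =
      fun x ↦ f 0 + ∑' j : ℕ, x ^ (j + 1) / ((j + 1).factorial : ℝ) * f (j + 1) := by
    ext x
    rw [(summable_pow_div_factorial_mul hf x).tsum_eq_zero_add]
    simp
  have l_mem : l ∈ Metric.ball (0 : ℝ) (|l| + 1) := by simp
  rw [split_first]
  refine (hasDerivAt_tsum_of_isPreconnected
    ((summable_pow_div_factorial (|l| + 1)).mul_right C) Metric.isOpen_ball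
    (convex_ball 0 (|l| + 1)).isPreconnected
    (fun j x _ ↦ (hasDerivAt_pow_succ_div_factorial j x).mul_const (f (j + 1)))
    (fun j x hx ↦ ?_) l_mem ((summable_nat_add_iff 1).2 (summable_pow_div_factorial_mul hf l))
    l_mem).const_add (f 0)
  rw [norm_mul, norm_div, norm_pow, norm_natCast]
  have norm_x_le : ‖x‖ ≤ |l| + 1 := (mem_ball_zero_iff.1 hx).le
  have f_le : ‖f (j + 1)‖ ≤ C := hf (j + 1)
  gcongr

lemma poissonAverage_eq_exp_neg_mul (f : ℕ → ℝ) (l : ℝ) :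
    poissonAverage f l = exp (-l) * ∑' j : ℕ, l ^ j / (j.factorial : ℝ) * f j := by
  rw [poissonAverage, ← tsum_mul_left]
  exact tsum_congr fun j ↦ by ring

lemma hasDerivAt_poissonAverage (hf : ∀ j, |f j| ≤ C) (l : ℝ) :
    HasDerivAt (poissonAverage f) (poissonAverage (fun j ↦ f (j + 1) - f j) l) l := by
  have exp_deriv : HasDerivAt (fun x : ℝ ↦ exp (-x)) (-exp (-l)) l := by
    simpa using (hasDerivAt_neg l).exp
  rw [funext (poissonAverage_eq_exp_neg_mul f)]
  refine (exp_deriv.mul (hasDerivAt_tsum_pow_div_factorial_mul hf l)).congr_deriv ?_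
  simp only [poissonAverage_eq_exp_neg_mul, mul_sub]
  rw [(summable_pow_div_factorial_mul (fun j ↦ hf (j + 1)) l).tsum_sub
    (summable_pow_div_factorial_mul hf l)]
  ring

lemma continuous_poissonAverage (hf : ∀ j, |f j| ≤ C) : Continuous (poissonAverage f) :=
  continuous_iff_continuousAt.2 fun l ↦ (hasDerivAt_poissonAverage hf l).continuousAt

lemma integral_poissonAverage {α : Type*} [MeasurableSpace α] {μ : Measure α} {g : ℕ → α → ℝ}
    (hg : ∀ j, Integrable (g j) μ) (hC : ∀ j, ∫ y, ‖g j y‖ ∂μ ≤ C) (l : ℝ) :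
    ∫ y, poissonAverage (fun j ↦ g j y) l ∂μ = poissonAverage (fun j ↦ ∫ y, g j y ∂μ) l := by
  have abs_integral_le (j : ℕ) : |∫ y, ‖g j y‖ ∂μ| ≤ C := by
    rw [abs_of_nonneg (integral_nonneg fun y ↦ norm_nonneg _)]
    exact hC j
  have summable_norm : Summable fun j : ℕ ↦
      ∫ y, ‖exp (-l) * l ^ j / (j.factorial : ℝ) * g j y‖ ∂μ := by
    refine ((summable_pow_div_factorial_mul abs_integral_le |l|).mul_left (exp (-l))).congr
      fun j ↦ ?_
    simp_rw [norm_mul, integral_const_mul]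
    rw [norm_div, norm_mul, norm_pow, norm_natCast, norm_of_nonneg (exp_nonneg _), norm_eq_abs]
    ring
  simp_rw [poissonAverage, ← integral_const_mul]
  exact (integral_tsum_of_summable_integral_norm (fun j ↦ (hg j).const_mul _) summable_norm).symm

end PoissonAverage

section GammaCDF

lemma abs_cdf_le_one (μ : Measure ℝ) (x : ℝ) : |cdf μ x| ≤ 1 := by
  rw [abs_of_nonneg (cdf_nonneg μ x)]
  exact cdf_le_one μ x

variable {s r z : ℝ}

lemma integrable_gammaPDFReal (hs : 0 < s) (hr : 0 < r) : Integrable (gammaPDFReal s r) := by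
  refine ⟨(measurable_gammaPDFReal s r).aestronglyMeasurable, ?_⟩
  rw [hasFiniteIntegral_iff_ofReal (.of_forall (gammaPDFReal_nonneg hs hr))]
  exact (lintegral_gammaPDF_eq_one hs hr).trans_lt ENNReal.one_lt_top

lemma cdf_gammaMeasure_eq_intervalIntegral (hs : 0 < s) (hr : 0 < r) (z : ℝ) :
    cdf (gammaMeasure s r) z = ∫ y in (0 : ℝ)..z, gammaPDFReal s r y := by
  have integral_Iic_zero : ∫ y in Iic 0, gammaPDFReal s r y = 0 := by
    rw [integral_Iic_eq_integral_Iio]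
    exact setIntegral_eq_zero_of_forall_eq_zero fun y (hy : y < 0) ↦ if_neg hy.not_ge
  have integrable := integrable_gammaPDFReal hs hr
  rw [cdf_gammaMeasure_eq_integral hs hr,
    ← intervalIntegral.integral_Iic_sub_Iic integrable.integrableOn integrable.integrableOn,
    integral_Iic_zero, sub_zero]

lemma hasDerivAt_gammaPDFReal_add_one_div (hs : 0 < s) (hr : 0 < r) (hz : 0 < z) :
    HasDerivAt (fun y ↦ gammaPDFReal (s + 1) r y / r)
      (gammaPDFReal s r z - gammaPDFReal (s + 1) r z) z := by
  have rpow_deriv := hasDerivAt_rpow_const (x := z) (p := s) (.inl hz.ne')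
  have exp_deriv : HasDerivAt (fun y ↦ exp (-(r * y))) (exp (-(r * z)) * -(r * 1)) z :=
    ((hasDerivAt_id z).const_mul r).neg.exp
  have explicit_deriv :=
    ((rpow_deriv.mul exp_deriv).const_mul (r ^ (s + 1) / Gamma (s + 1))).div_const r
  refine (explicit_deriv.congr_of_eventuallyEq ?_).congr_deriv ?_
  · filter_upwards [eventually_gt_nhds hz] with y hy
    simp [gammaPDFReal, hy.le, mul_assoc]
  · simp only [gammaPDFReal, if_pos hz.le, Gamma_add_one hs.ne', rpow_add_one hr.ne',
      add_sub_cancel_right]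
    field_simp
    ring

lemma continuousOn_gammaPDFReal (hs : 1 ≤ s) : ContinuousOn (gammaPDFReal s r) (Ici 0) := by
  have explicit_cont : Continuous fun y ↦ r ^ s / Gamma s * y ^ (s - 1) * exp (-(r * y)) :=
    (continuous_const.mul (continuous_rpow_const (sub_nonneg.2 hs))).mul (by fun_prop)
  exact explicit_cont.continuousOn.congr fun y (hy : 0 ≤ y) ↦ if_pos hy

lemma cdf_gammaMeasure_sub_cdf_add_one (hs : 0 < s) (hr : 0 < r) (hz : 0 ≤ z) :
    cdf (gammaMeasure s r) z - cdf (gammaMeasure (s + 1) r) z = gammaPDFReal (s + 1) r z / r := by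
  have hs' : 0 < s + 1 := by linarith
  have integrable := (integrable_gammaPDFReal hs hr).intervalIntegrable (a := 0) (b := z)
  have integrable' := (integrable_gammaPDFReal hs' hr).intervalIntegrable (a := 0) (b := z)
  rw [cdf_gammaMeasure_eq_intervalIntegral hs hr, cdf_gammaMeasure_eq_intervalIntegral hs' hr,
    ← intervalIntegral.integral_sub integrable integrable',
    intervalIntegral.integral_eq_sub_of_hasDerivAt_of_le hz
      (((continuousOn_gammaPDFReal (by linarith)).mono Icc_subset_Ici_self).div_const r)
      (fun y hy ↦ hasDerivAt_gammaPDFReal_add_one_div hs hr hy.1) (integrable.sub integrable')]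
  simp [gammaPDFReal, zero_rpow hs.ne']

end GammaCDF

section NoncentralChiSquared

variable {k z : ℝ}

lemma ncChiSqPDF_eq_poissonAverage (k lam : ℝ) (hz : 0 ≤ z) :
    ncChiSqPDF k lam z = poissonAverage (fun j ↦ gammaPDFReal (k / 2 + j) (1 / 2) z) (lam / 2) := by
  refine tsum_congr fun j ↦ ?_
  simp only [gammaPDFReal, if_pos hz, div_rpow zero_le_one zero_le_two, one_rpow, neg_div]
  ring_nf

lemma ncChiSqCDF_eq_poissonAverage (hk : 0 < k) (hz : 0 ≤ z) (lam : ℝ) :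
    ncChiSqCDF z k lam =
      poissonAverage (fun j ↦ cdf (gammaMeasure (k / 2 + j) (1 / 2)) z) (lam / 2) := by
  have shape_pos (j : ℕ) : 0 < k / 2 + j := by positivity
  have integral_gammaPDFReal (j : ℕ) : ∫ y in Ioc 0 z, gammaPDFReal (k / 2 + j) (1 / 2) y =
      cdf (gammaMeasure (k / 2 + j) (1 / 2)) z := by
    rw [cdf_gammaMeasure_eq_intervalIntegral (shape_pos j) one_half_pos,
      intervalIntegral.integral_of_le hz]
  have integral_norm_le (j : ℕ) : ∫ y in Ioc 0 z, ‖gammaPDFReal (k / 2 + j) (1 / 2) y‖ ≤ 1 := by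
    simp_rw [norm_of_nonneg (gammaPDFReal_nonneg (shape_pos j) one_half_pos _),
      integral_gammaPDFReal]
    exact cdf_le_one _ z
  rw [ncChiSqCDF, intervalIntegral.integral_of_le hz, setIntegral_congr_fun measurableSet_Ioc
    fun y hy ↦ ncChiSqPDF_eq_poissonAverage k lam hy.1.le, integral_poissonAverage
    (fun j ↦ (integrable_gammaPDFReal (shape_pos j) one_half_pos).integrableOn) integral_norm_le]
  simp_rw [integral_gammaPDFReal]

lemma gammaPDFReal_eq_cdf_sub_cdf (hk : 0 < k) (hz : 0 ≤ z) (j : ℕ) :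
    gammaPDFReal ((k + 2) / 2 + j) (1 / 2) z =
      (cdf (gammaMeasure (k / 2 + j) (1 / 2)) z -
        cdf (gammaMeasure (k / 2 + (j + 1 : ℕ)) (1 / 2)) z) / 2 := by
  have shape_pos : 0 < k / 2 + j := by positivity
  have recurrence := cdf_gammaMeasure_sub_cdf_add_one shape_pos one_half_pos hz
  rw [show (k + 2) / 2 + j = k / 2 + j + 1 by ring,
    show k / 2 + ((j + 1 : ℕ) : ℝ) = k / 2 + j + 1 by push_cast; ring, recurrence]
  ring

lemma hasDerivAt_ncChiSqCDF (hk : 0 < k) (hz : 0 ≤ z) (lam : ℝ) :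
    HasDerivAt (ncChiSqCDF z k) (-ncChiSqPDF (k + 2) lam z) lam := by
  have average_deriv := (hasDerivAt_poissonAverage (fun j : ℕ ↦ abs_cdf_le_one
    (gammaMeasure (k / 2 + j) (1 / 2)) z) (lam / 2)).comp lam ((hasDerivAt_id lam).div_const 2)
  rw [show ncChiSqCDF z k = _ from funext (ncChiSqCDF_eq_poissonAverage hk hz)]
  refine average_deriv.congr_deriv ?_
  rw [ncChiSqPDF_eq_poissonAverage _ _ hz, poissonAverage, poissonAverage, ← tsum_mul_right,
    ← tsum_neg]
  refine tsum_congr fun j ↦ ?_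
  rw [gammaPDFReal_eq_cdf_sub_cdf hk hz]
  ring

lemma continuous_ncChiSqPDF_noncentrality (hk : 2 < k) (hz : 0 ≤ z) :
    Continuous fun lam ↦ ncChiSqPDF k lam z := by
  have density_le (j : ℕ) : |gammaPDFReal (k / 2 + j) (1 / 2) z| ≤ (1 + 1) / 2 := by
    have as_cdf_sub := gammaPDFReal_eq_cdf_sub_cdf (sub_pos.2 hk) hz j
    rw [sub_add_cancel] at as_cdf_sub
    rw [as_cdf_sub, abs_div, abs_two]
    gcongr
    exact (abs_sub _ _).trans (add_le_add (abs_cdf_le_one _ z) (abs_cdf_le_one _ z))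
  simp_rw [fun lam ↦ ncChiSqPDF_eq_poissonAverage k lam hz]
  exact (continuous_poissonAverage density_le).comp (continuous_id.div_const 2)

lemma integral_ncChiSqPDF_noncentrality (hk : 2 < k) (hz : 0 ≤ z) (l₁ l₂ : ℝ) :
    ∫ l in l₁..l₂, ncChiSqPDF k l z = ncChiSqCDF z (k - 2) l₁ - ncChiSqCDF z (k - 2) l₂ := by
  have deriv_neg (l : ℝ) : HasDerivAt (-ncChiSqCDF z (k - 2)) (ncChiSqPDF k l z) l := by
    simpa using (hasDerivAt_ncChiSqCDF (sub_pos.2 hk) hz l).neg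
  rw [intervalIntegral.integral_eq_sub_of_hasDerivAt (fun l _ ↦ deriv_neg l)
    ((continuous_ncChiSqPDF_noncentrality hk hz).intervalIntegrable _ _), Pi.neg_apply,
    Pi.neg_apply]
  ring

lemma besselI_sqrt (ν : ℝ) {w : ℝ} (hw : 0 < w) :
    besselI ν (√w) = (w / 4) ^ (1 / 2 * ν) *
      ∑' j : ℕ, (w / 4) ^ j / ((j.factorial : ℝ) * Gamma ((j : ℝ) + ν + 1)) := by
  have half_sqrt : √w / 2 = (w / 4) ^ (1 / 2 : ℝ) := by
    rw [← sqrt_eq_rpow, show w / 4 = w / 2 ^ 2 by norm_num, sqrt_div hw.le, sqrt_sq zero_le_two]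
  rw [besselI, ← tsum_mul_left]
  refine tsum_congr fun j ↦ ?_
  rw [half_sqrt, ← rpow_mul (by positivity),
    show 1 / 2 * (2 * (j : ℝ) + ν) = 1 / 2 * ν + j by ring, rpow_add (by positivity),
    rpow_natCast, mul_div_assoc]

lemma ncChiSqPDF_eq_besselI (k : ℝ) {lam : ℝ} (hlam : 0 < lam) (hz : 0 < z) :
    ncChiSqPDF k lam z = 1 / 2 * (z / lam) ^ (1 / 2 * (k / 2 - 1)) * exp (-(lam + z) / 2) *
      besselI (k / 2 - 1) (√(lam * z)) := by
  obtain ⟨ν, hν⟩ : ∃ ν, ν = k / 2 - 1 := ⟨_, rfl⟩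
  have power_merge : (z / lam) ^ (1 / 2 * ν) * (lam * z / 4) ^ (1 / 2 * ν) = (z / 2) ^ ν := by
    rw [← mul_rpow (by positivity) (by positivity),
      show z / lam * (lam * z / 4) = (z / 2) ^ (2 : ℝ) by rw [rpow_two]; field_simp; norm_num,
      ← rpow_mul (by positivity)]
    ring_nf
  have power_split (j : ℕ) :
      z ^ ((j : ℝ) + ν) / 2 ^ ((j : ℝ) + ν + 1) = (z / 2) ^ j * (z / 2) ^ ν / 2 := by
    rw [rpow_add_one two_ne_zero, ← div_div, ← div_rpow hz.le zero_le_two,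
      rpow_add (by positivity), rpow_natCast]
  have exp_split : exp (-(lam + z) / 2) = exp (-lam / 2) * exp (-z / 2) := by
    rw [← exp_add]; ring_nf
  rw [← hν, besselI_sqrt ν (by positivity), ← mul_assoc, mul_right_comm _ (exp _) _,
    mul_assoc (1 / 2), power_merge, ncChiSqPDF, ← tsum_mul_left]
  refine tsum_congr fun j ↦ ?_
  calc
    _ = exp (-lam / 2) * exp (-z / 2) * (lam / 2) ^ j /
        (j.factorial * Gamma (j + ν + 1)) * (z ^ ((j : ℝ) + ν) / 2 ^ ((j : ℝ) + ν + 1)) := by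
      rw [show k / 2 + j - 1 = j + ν by rw [hν]; ring,
        show k / 2 + j = j + ν + 1 by rw [hν]; ring]
      ring
    _ = _ := by
      rw [power_split, exp_split, show lam * z / 4 = lam / 2 * (z / 2) by ring, mul_pow]
      ring

end NoncentralChiSquared

lemma max_sub_mul_zero {b : ℝ} (hb : 0 < b) (K w : ℝ) :
    max (K - b * w) 0 = b * max (K / b - w) 0 := by
  rw [mul_max_of_nonneg _ _ hb.le, mul_sub, mul_div_cancel₀ K hb.ne', mul_zero]

section SquaredBessel

variable {δ T x y L : ℝ}

lemma besqDensity_eq_ncChiSqPDF (hδ : 2 ≤ δ) (hT : 0 < T) (hx : 0 < x) (hy : 0 < y) :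
    besqDensity δ y T x = 1 / T * ncChiSqPDF δ (x / T) (y / T) := by
  rw [ncChiSqPDF_eq_besselI δ (by positivity) (by positivity), besqDensity,
    abs_of_nonneg (by linarith), div_div_div_cancel_right₀ hT.ne', div_mul_div_comm,
    sqrt_div (by positivity), sqrt_mul_self hT.le, ← add_div, ← neg_div, div_div, mul_comm T 2]
  ring

lemma rpow_mul_besqDensity (hx : 0 < x) (hy : 0 < y) :
    (x / y) ^ (δ / 2 - 1) * besqDensity δ y T x = besqDensity δ x T y := by
  have power_eq : (x / y) ^ (δ / 2 - 1) * (y / x) ^ ((1 / 2) * (δ / 2 - 1)) =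
      (x / y) ^ ((1 / 2) * (δ / 2 - 1)) := by
    rw [← inv_div x y, inv_rpow (by positivity), ← rpow_neg (by positivity),
      ← rpow_add (by positivity)]
    ring_nf
  rw [besqDensity, besqDensity, ← power_eq, add_comm y x, mul_comm y x]
  ring

lemma integral_besqDensity (hδ : 2 ≤ δ) (hT : 0 < T) (hx : 0 < x) (hL : 0 ≤ L) :
    ∫ y in (0 : ℝ)..L, besqDensity δ y T x = ncChiSqCDF (L / T) δ (x / T) := by
  have density_eq : EqOn (fun y ↦ besqDensity δ y T x)
      (fun y ↦ 1 / T * ncChiSqPDF δ (x / T) (y / T)) (Ioo 0 L) :=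
    fun y hy ↦ besqDensity_eq_ncChiSqPDF hδ hT hx hy.1
  rw [intervalIntegral.integral_congr_Ioo_of_le hL density_eq,
    intervalIntegral.integral_const_mul, intervalIntegral.integral_comp_div _ hT.ne',
    zero_div, smul_eq_mul, one_div, inv_mul_cancel_left₀ hT.ne', ncChiSqCDF]

lemma integral_besqDensity_source (hδ : 2 < δ) (hT : 0 < T) (hx : 0 < x) (hL : 0 ≤ L) :
    ∫ y in (0 : ℝ)..L, besqDensity δ x T y =
      ncChiSqCDF (x / T) (δ - 2) 0 - ncChiSqCDF (x / T) (δ - 2) (L / T) := by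
  have density_eq : EqOn (fun y ↦ besqDensity δ x T y)
      (fun y ↦ 1 / T * ncChiSqPDF δ (y / T) (x / T)) (Ioo 0 L) :=
    fun y hy ↦ besqDensity_eq_ncChiSqPDF hδ.le hT hy.1 hx
  rw [intervalIntegral.integral_congr_Ioo_of_le hL density_eq,
    intervalIntegral.integral_const_mul,
    intervalIntegral.integral_comp_div (fun l ↦ ncChiSqPDF δ l (x / T)) hT.ne',
    integral_ncChiSqPDF_noncentrality hδ (by positivity), zero_div, smul_eq_mul, one_div,
    inv_mul_cancel_left₀ hT.ne']

lemma intervalIntegrable_besqDensity_source (hδ : 2 < δ) (hT : 0 < T) (hx : 0 < x) (hL : 0 ≤ L) :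
    IntervalIntegrable (fun y ↦ besqDensity δ x T y) volume 0 L := by
  have pdf_continuous : Continuous fun y ↦ 1 / T * ncChiSqPDF δ (y / T) (x / T) :=
    continuous_const.mul ((continuous_ncChiSqPDF_noncentrality hδ (by positivity)).comp
      (continuous_id.div_const T))
  refine (pdf_continuous.intervalIntegrable 0 L).congr fun y hy ↦ ?_
  rw [uIoc_of_le hL] at hy
  exact (besqDensity_eq_ncChiSqPDF hδ.le hT hy.1 hx).symm

lemma intervalIntegrable_besqDensity (hδ : 2 < δ) (hT : 0 < T) (hx : 0 < x) (hL : 0 ≤ L) :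
    IntervalIntegrable (fun y ↦ besqDensity δ y T x) volume 0 L := by
  have power_continuous : Continuous fun y ↦ (y / x) ^ (δ / 2 - 1) :=
    (continuous_rpow_const (by linarith)).comp (continuous_id.div_const x)
  refine ((intervalIntegrable_besqDensity_source hδ hT hx hL).continuousOn_mul
    power_continuous.continuousOn).congr fun y hy ↦ ?_
  rw [uIoc_of_le hL] at hy
  exact rpow_mul_besqDensity hy.1 hx

lemma integral_put_payoff_mul_besqDensity (hδ : 2 < δ) (hT : 0 < T) (hx : 0 < x) (hL : 0 ≤ L) :
    ∫ y in Ioi 0, x ^ (δ / 2 - 1) / y ^ (δ / 2 - 1) *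
        max (L ^ (δ / 2 - 1) - y ^ (δ / 2 - 1)) 0 * besqDensity δ y T x =
      L ^ (δ / 2 - 1) * (ncChiSqCDF (x / T) (δ - 2) 0 - ncChiSqCDF (x / T) (δ - 2) (L / T)) -
        x ^ (δ / 2 - 1) * ncChiSqCDF (L / T) δ (x / T) := by
  have index_pos : 0 < δ / 2 - 1 := by linarith
  have in_the_money : EqOn
      (fun y ↦ x ^ (δ / 2 - 1) / y ^ (δ / 2 - 1) *
        max (L ^ (δ / 2 - 1) - y ^ (δ / 2 - 1)) 0 * besqDensity δ y T x)
      (fun y ↦ L ^ (δ / 2 - 1) * besqDensity δ x T y - x ^ (δ / 2 - 1) * besqDensity δ y T x)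
      (Ioc 0 L) := fun y ⟨y_pos, y_le⟩ ↦ by
    have power_le : y ^ (δ / 2 - 1) ≤ L ^ (δ / 2 - 1) := rpow_le_rpow y_pos.le y_le index_pos.le
    simp only [max_eq_left (sub_nonneg.2 power_le)]
    rw [← rpow_mul_besqDensity hx y_pos, div_rpow hx.le y_pos.le]
    field_simp
  have out_of_the_money (y : ℝ) (hy : y ∈ Ioi 0 \ Ioc 0 L) :
      x ^ (δ / 2 - 1) / y ^ (δ / 2 - 1) *
        max (L ^ (δ / 2 - 1) - y ^ (δ / 2 - 1)) 0 * besqDensity δ y T x = 0 := by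
    have L_le : L ≤ y := (not_le.1 fun y_le ↦ hy.2 ⟨hy.1, y_le⟩).le
    rw [max_eq_right (sub_nonpos.2 (rpow_le_rpow hL L_le index_pos.le)), mul_zero, zero_mul]
  rw [setIntegral_eq_of_subset_of_forall_sdiff_eq_zero measurableSet_Ioi Ioc_subset_Ioi_self
      out_of_the_money, setIntegral_congr_fun measurableSet_Ioc in_the_money,
    ← intervalIntegral.integral_of_le hL, intervalIntegral.integral_sub
      ((intervalIntegrable_besqDensity_source hδ hT hx hL).const_mul _)
      ((intervalIntegrable_besqDensity hδ hT hx hL).const_mul _),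
    intervalIntegral.integral_const_mul, intervalIntegral.integral_const_mul,
    integral_besqDensity_source hδ hT hx hL, integral_besqDensity hδ.le hT hx hL]

lemma integral_realWorld_put_payoff_mul_besqDensity (hδ : 2 < δ) (hT : 0 < T) {s K B : ℝ}
    (hs : 0 < s) (hK : 0 ≤ K) (hB : 0 < B) (b : ℝ) :
    ∫ y in Ioi 0, s * b / (B * y ^ (δ / 2 - 1)) * max (K - B * y ^ (δ / 2 - 1)) 0 *
        besqDensity δ y T (s ^ (δ / 2 - 1)⁻¹) =
      -(s * b) * ncChiSqCDF ((K / B) ^ (δ / 2 - 1)⁻¹ / T) δ (s ^ (δ / 2 - 1)⁻¹ / T) +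
        K * (b / B) * (ncChiSqCDF (s ^ (δ / 2 - 1)⁻¹ / T) (δ - 2) 0 -
          ncChiSqCDF (s ^ (δ / 2 - 1)⁻¹ / T) (δ - 2) ((K / B) ^ (δ / 2 - 1)⁻¹ / T)) := by
  have index_ne_zero : δ / 2 - 1 ≠ 0 := by linarith
  have strike_nonneg : 0 ≤ K / B := div_nonneg hK hB.le
  have discounted_put := integral_put_payoff_mul_besqDensity hδ hT
    (rpow_pos_of_pos hs (δ / 2 - 1)⁻¹) (rpow_nonneg strike_nonneg (δ / 2 - 1)⁻¹)
  rw [rpow_inv_rpow hs.le index_ne_zero, rpow_inv_rpow strike_nonneg index_ne_zero]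
    at discounted_put
  calc
    _ = b * ∫ y in Ioi 0, s / y ^ (δ / 2 - 1) * max (K / B - y ^ (δ / 2 - 1)) 0 *
        besqDensity δ y T (s ^ (δ / 2 - 1)⁻¹) := by
      rw [← integral_const_mul]
      congr 1 with y
      rw [max_sub_mul_zero hB]
      field_simp
    _ = _ := by rw [discounted_put]; ring

end SquaredBessel

lemma strictMono_mul_exp_sub_one {A ρ : ℝ} (hA : 0 < A) (hρ : 0 < ρ) :
    StrictMono fun u ↦ A * (exp (ρ * u) - 1) := fun u v huv ↦ by
  dsimp only
  gcongr

/-- European put price formula under the TCEV model with constant short rate `r`: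
the fair (real-world) put price
`p = E[(S*_t/S*_T)(K - S*_T)^+]`, computed with `S̄_T = X_{φ(T)}^{1/(2(1-a))}` for a
BESQ`^δ` process `X` started at `S̄_t^{2(1-a)}`, equals
`-S̄_t β(t) χ'²(K̃/Δφ; δ, S̄_t^{2(1-a)}/Δφ)
  + K (β(t)/β(T))[χ'²(S̄_t^{2(1-a)}/Δφ; δ-2, 0) - χ'²(S̄_t^{2(1-a)}/Δφ; δ-2, K̃/Δφ)]`. -/
theorem stmt15 (r c a α₀ η t T K Sbar : ℝ)
    (hc : 0 < c) (ha : a < 1) (hα : 0 < α₀) (hη : 0 < η)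
    (ht : 0 ≤ t) (htT : t < T) (hK : 0 < K) (hS : 0 < Sbar)
    (β : ℝ → ℝ) (hβ : ∀ u, β u = Real.exp (r * u))
    (δ : ℝ) (hδ : δ = (3 - 2 * a) / (1 - a))
    (φ : ℝ → ℝ)
    (hφ : ∀ u, φ u = (1 - a) * α₀ ^ (2 * (1 - a)) * c ^ 2 / (2 * η) *
      (Real.exp (2 * (1 - a) * η * u) - 1))
    (Δφ : ℝ) (hΔφ : Δφ = φ T - φ t)
    (Ktilde : ℝ) (hKt : Ktilde = (K / β T) ^ (2 * (1 - a)))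
    (p : ℝ)
    (hp : p = ∫ y in Set.Ioi (0 : ℝ),
      (Sbar * β t / (β T * y ^ (1 / (2 * (1 - a))))) *
        max (K - β T * y ^ (1 / (2 * (1 - a)))) 0 *
        besqDensity δ y Δφ (Sbar ^ (2 * (1 - a)))) :
    p = -(Sbar * β t) * ncChiSqCDF (Ktilde / Δφ) δ (Sbar ^ (2 * (1 - a)) / Δφ)
      + K * (β t / β T) *
        (ncChiSqCDF (Sbar ^ (2 * (1 - a)) / Δφ) (δ - 2) 0 -
          ncChiSqCDF (Sbar ^ (2 * (1 - a)) / Δφ) (δ - 2) (Ktilde / Δφ)) := by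
  have one_sub_a_pos : 0 < 1 - a := sub_pos.2 ha
  have index_eq : 1 / (2 * (1 - a)) = δ / 2 - 1 := by rw [hδ]; field_simp; ring
  have inv_index_eq : 2 * (1 - a) = (δ / 2 - 1)⁻¹ := by rw [← index_eq, one_div, inv_inv]
  have two_lt_δ : 2 < δ := by
    have index_pos : 0 < δ / 2 - 1 := by rw [← index_eq]; positivity
    linarith
  have Δφ_pos : 0 < Δφ := by
    rw [hΔφ, hφ, hφ, sub_pos]
    exact strictMono_mul_exp_sub_one (by positivity) (by positivity) htT
  have β_T_pos : 0 < β T := hβ T ▸ exp_pos _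
  rw [hp, hKt, index_eq, inv_index_eq]
  exact integral_realWorld_put_payoff_mul_besqDensity two_lt_δ Δφ_pos hS hK.le β_T_pos (β t)
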